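/- For v_i > v_k > 0, γ ≥ 1, r ≥ 1, and probabilities P > P̃ > 0, P' > P̃' > 0: if G = r·P·(v_k − v_i/γ) + P̃·(v_i − v_k/γ) > 0, then G' = r·P'·(v_k/γ − v_i) + P̃'·(v_i/γ − v_k) < 0. (A pair of candidates that 'votes' to prefer a busy candidate in a lower index cannot simultaneously vote to prefer a free candidate in a lower index.) -/

import Mathlib

/-!
With `C₁ = v_k − v_i/γ` and `C₂ = v_i − v_k/γ`, the sum `C₁ + C₂ = (v_i + v_k)(1 − 1/γ)` is
nonnegative and `C₁ < C₂`, so `C₂ > 0`. As `-G' = r·P'·C₂ + P̃'·C₁` puts the larger weight on `C₂`,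
it is positive.
-/

theorem mul_add_mul_pos_of_lt_of_add_nonneg {R : Type*} [Ring R] [PartialOrder R]
    [IsStrictOrderedRing R] {a b x y : R} (hb : 0 ≤ b) (hba : b < a) (hx : 0 < x)
    (hxy : 0 ≤ x + y) : 0 < a * x + b * y :=
  calc
    0 < (a - b) * x + b * (x + y) :=
      add_pos_of_pos_of_nonneg (mul_pos (sub_pos.2 hba) hx) (mul_nonneg hb hxy)
    _ = a * x + b * y := by noncomm_ring

section Field

variable {K : Type*} [Field K] [LinearOrder K] [IsStrictOrderedRing K] {x y γ : K}

theorem sub_div_add_sub_div_nonneg (hxy : 0 ≤ x + y) (hγ : 1 ≤ γ) :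
    0 ≤ (x - y / γ) + (y - x / γ) :=
  calc
    0 ≤ (x + y) - (x + y) / γ := sub_nonneg.2 (div_le_self hxy hγ)
    _ = (x - y / γ) + (y - x / γ) := by ring

theorem sub_div_lt_sub_div (hyx : y < x) (hγ : 0 < γ) : y - x / γ < x - y / γ :=
  sub_lt_sub hyx (div_lt_div_of_pos_right hyx hγ)

theorem stmt17_general {p q : K} (hxy : 0 ≤ x + y) (hyx : y < x) (hγ : 1 ≤ γ)
    (hq : 0 ≤ q) (hqp : q < p) : p * (y / γ - x) + q * (x / γ - y) < 0 := by
  have sum_nonneg : 0 ≤ (x - y / γ) + (y - x / γ) := sub_div_add_sub_div_nonneg hxy hγ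
  have gap_lt_gap : y - x / γ < x - y / γ := sub_div_lt_sub_div hyx (zero_lt_one.trans_le hγ)
  have gap_pos : 0 < x - y / γ := by linarith
  have weighted_pos : 0 < p * (x - y / γ) + q * (y - x / γ) :=
    mul_add_mul_pos_of_lt_of_add_nonneg hq hqp gap_pos sum_nonneg
  linarith

end Field

/-- For `v_i > v_k > 0`, `γ ≥ 1`, `r ≥ 1`, and probabilities
`P > P̃ > 0`, `P' > P̃' > 0`: if
`G = r·P·(v_k − v_i/γ) + P̃·(v_i − v_k/γ) > 0` (the pair "votes" to prefer a
busy candidate at the lower index), then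
`G' = r·P'·(v_k/γ − v_i) + P̃'·(v_i/γ − v_k) < 0` (it cannot simultaneously
vote to prefer a free candidate at the lower index). -/
theorem stmt17
    (vi vk γ r P Pt P' Pt' : ℝ)
    (hvk : 0 < vk) (hvik : vk < vi)
    (hγ : 1 ≤ γ) (hr : 1 ≤ r)
    (hPt : 0 < Pt) (hP : Pt < P)
    (hPt' : 0 < Pt') (hP' : Pt' < P')
    (hG : 0 < r * P * (vk - vi / γ) + Pt * (vi - vk / γ)) :
    r * P' * (vk / γ - vi) + Pt' * (vi / γ - vk) < 0 := by
  have hweights : Pt' < r * P' := hP'.trans_le (le_mul_of_one_le_left (hPt'.trans hP').le hr)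
  exact stmt17_general (by linarith) hvik hγ hPt'.le hweights
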